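/- Let ω = π/2, let Ψ be a closed disk in ℝ² and let p be a point. There exists a deterministic adaptive probing strategy (depending on Ψ and p) that reconstructs every convex polygon O with p ∈ O ⊂ Ψ all of whose interior angles are strictly greater than π/2 using at most 2n − 3 valid π/2-probes, where n is the number of vertices of O. -/

import Mathlib

open Real EuclideanGeometry

noncomputable section

abbrev Plane := EuclideanSpace ℝ (Fin 2)

/-- Counterclockwise rotation of a vector of the plane by angle `θ`. -/
def rot (θ : ℝ) (d : Plane) : Plane :=
  (WithLp.equiv 2 (Fin 2 → ℝ)).symm
    ![Real.cos θ * d 0 - Real.sin θ * d 1, Real.sin θ * d 0 + Real.cos θ * d 1]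

/-- A convex polygon: the convex hull of at least 3 points in strictly convex position;
the points are the vertices. -/
structure ConvexPolygon where
  verts : Finset Plane
  three_le_card : 3 ≤ verts.card
  strictConvexPos : ∀ v ∈ verts, v ∉ convexHull ℝ ((verts : Set Plane) \ {v})

/-- The polygon as a subset of the plane. -/
def ConvexPolygon.body (O : ConvexPolygon) : Set Plane :=
  convexHull ℝ (O.verts : Set Plane)

/-- `x` and `y` are adjacent vertices of `O` (the segment joining them is an edge of `O`). -/
def ConvexPolygon.Adj (O : ConvexPolygon) (x y : Plane) : Prop :=
  x ∈ O.verts ∧ y ∈ O.verts ∧ x ≠ y ∧ segment ℝ x y ⊆ frontier O.body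

/-- The interior angle of `O` at a vertex `v`: the angle `∠ u v w` where `u` and `w` are
the two vertices adjacent to `v`. -/
def ConvexPolygon.intAngle (O : ConvexPolygon) (v : Plane) : ℝ :=
  sSup {θ | ∃ u w, O.Adj v u ∧ O.Adj v w ∧ u ≠ w ∧ θ = ∠ u v w}

/-- A narrow vertex: a vertex whose interior angle is at most `ω`. -/
def ConvexPolygon.IsNarrow (O : ConvexPolygon) (ω : ℝ) (v : Plane) : Prop :=
  v ∈ O.verts ∧ O.intAngle v ≤ ω

/-- `O` is a rectangle: exactly 4 vertices, all interior angles `π/2`. -/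
def ConvexPolygon.IsRectangle (O : ConvexPolygon) : Prop :=
  O.verts.card = 4 ∧ ∀ v ∈ O.verts, O.intAngle v = Real.pi / 2

/-- The `ω`-wedge with apex `q` and first arm direction `d`. -/
def wedge (ω : ℝ) (q d : Plane) : Set Plane :=
  {x | ∃ s t : ℝ, 0 ≤ s ∧ 0 ≤ t ∧ x = q + s • d + t • rot ω d}

/-- The first arm of a wedge: the ray from `q` in direction `d`. -/
def arm1 (q d : Plane) : Set Plane := {x | ∃ t : ℝ, 0 ≤ t ∧ x = q + t • d}

/-- The second arm of an `ω`-wedge: the ray from `q` in direction `rot ω d`. -/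
def arm2 (ω : ℝ) (q d : Plane) : Set Plane := arm1 q (rot ω d)

/-- `(q, d)` is a valid `ω`-probe of `O`: a wedge with unit arm direction containing `O`,
each of whose arms meets `O`. -/
def IsValidProbe (ω : ℝ) (O : ConvexPolygon) (q d : Plane) : Prop :=
  ‖d‖ = 1 ∧ O.body ⊆ wedge ω q d ∧
    (arm1 q d ∩ O.body).Nonempty ∧ (arm2 ω q d ∩ O.body).Nonempty

/-- A directed line: a point together with a unit direction. -/
structure DirLine where
  pt : Plane
  dir : Plane
  norm_dir : ‖dir‖ = 1

/-- Membership of a point in a directed line. -/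
def DirLine.mem (L : DirLine) (x : Plane) : Prop := ∃ t : ℝ, x = L.pt + t • L.dir

/-- A valid `ω`-probe of `O` along the directed line `L`. -/
def IsValidProbeAlong (ω : ℝ) (O : ConvexPolygon) (L : DirLine) (q d : Plane) : Prop :=
  IsValidProbe ω O q d ∧ L.mem q ∧ ∃ t : ℝ, 0 ≤ t ∧ q + t • L.dir ∈ O.body

/-- `p` is the point of `A` closest to `q`. -/
def ClosestOn (q : Plane) (A : Set Plane) (p : Plane) : Prop :=
  p ∈ A ∧ ∀ x ∈ A, dist q p ≤ dist q x


/-- The outcome of a probe: apex, arm direction, and the two closest contact points. -/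
structure Outcome where
  apex : Plane
  dir : Plane
  p₁ : Plane
  p₂ : Plane

/-- `out` is the outcome of a valid `ω`-probe of `O` along `L`: a valid probe together with
the points of each arm ∩ `O` closest to the apex. -/
def IsOutcome (ω : ℝ) (O : ConvexPolygon) (L : DirLine) (out : Outcome) : Prop :=
  IsValidProbeAlong ω O L out.apex out.dir ∧
  ClosestOn out.apex (arm1 out.apex out.dir ∩ O.body) out.p₁ ∧
  ClosestOn out.apex (arm2 ω out.apex out.dir ∩ O.body) out.p₂

/-- The answer to a query: a probe outcome, or `none` (the token "miss"). -/
abbrev Answer := Option Outcome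

/-- A deterministic adaptive probing strategy: maps each finite sequence of answers either to
a next query (a directed line) or to a final output (a convex polygon). -/
abbrev Strategy := List Answer → DirLine ⊕ ConvexPolygon

/-- A correct answer to query `L` against the polygon `O`: the outcome of some valid `ω`-probe
of `O` along `L` if one exists, and "miss" otherwise. -/
def ValidAnswer (ω : ℝ) (O : ConvexPolygon) (L : DirLine) : Answer → Prop
  | none => ¬ ∃ q d, IsValidProbeAlong ω O L q d
  | some out => IsOutcome ω O L out

/-- `l` is (a prefix of) a play of the strategy `S` against `O`: at every proper prefix,
`S` produces a query, and the corresponding entry of `l` is a correct answer to it. -/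
def Consistent (ω : ℝ) (S : Strategy) (O : ConvexPolygon) (l : List Answer) : Prop :=
  ∀ (i : ℕ) (h : i < l.length),
    ∃ L, S (l.take i) = Sum.inl L ∧ ValidAnswer ω O L (l.get ⟨i, h⟩)

/-- `S` reconstructs `O` using at most `k` probes: in every play against `O`, every final
output of `S` is exactly `O`, and `S` produces a final output after at most `k` queries. -/
def Reconstructs (ω : ℝ) (S : Strategy) (O : ConvexPolygon) (k : ℕ) : Prop :=
  (∀ l, Consistent ω S O l → ∀ P, S l = Sum.inr P → P.verts = O.verts) ∧
  (∀ l, Consistent ω S O l → l.length = k → ∃ P, S l = Sum.inr P)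

/-- There is a play of `S` against `O` in which either `S` never outputs `O`
(it plays forever, or outputs a polygon different from `O`), or `S` makes at least `m`
queries before outputting. -/
def BadPlay (ω : ℝ) (S : Strategy) (O : ConvexPolygon) (m : ℕ) : Prop :=
  (∃ f : ℕ → Answer, ∀ k : ℕ, Consistent ω S O (List.ofFn (fun i : Fin k => f i))) ∨
  (∃ l P, Consistent ω S O l ∧ S l = Sum.inr P ∧ (P.verts ≠ O.verts ∨ m ≤ l.length))

/-- Coordinate dot product. -/
def dt (x y : Plane) : ℝ := x 0 * y 0 + x 1 * y 1

/-- Coordinate cross product. -/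
def cr (x y : Plane) : ℝ := x 0 * y 1 - x 1 * y 0

/-- Rotation by a right angle. -/
def JJ (d : Plane) : Plane := rot (Real.pi / 2) d

lemma JJ_zero (d : Plane) : JJ d 0 = - d 1 := by simp [JJ, rot]
lemma JJ_one (d : Plane) : JJ d 1 = d 0 := by simp [JJ, rot]

lemma pl_ext {x y : Plane} (h0 : x 0 = y 0) (h1 : x 1 = y 1) : x = y := by
  ext i; fin_cases i
  · exact h0
  · exact h1

lemma pl_add (x y : Plane) (i : Fin 2) : (x + y) i = x i + y i := rfl
lemma pl_sub (x y : Plane) (i : Fin 2) : (x - y) i = x i - y i := rfl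
lemma pl_smul (a : ℝ) (x : Plane) (i : Fin 2) : (a • x) i = a * x i := rfl

lemma norm_one_iff (d : Plane) : ‖d‖ = 1 ↔ d 0 * d 0 + d 1 * d 1 = 1 := by
  rw [EuclideanSpace.norm_eq, Real.sqrt_eq_one]
  simp [Fin.sum_univ_two, sq]

lemma inner_dt (x y : Plane) : inner ℝ x y = dt x y := by
  simp [PiLp.inner_apply, Fin.sum_univ_two, dt, mul_comm]

lemma dist_ray (q d : Plane) (hd : ‖d‖ = 1) (s : ℝ) (hs : 0 ≤ s) : dist q (q + s • d) = s := by
  rw [dist_eq_norm]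
  have : q - (q + s • d) = -(s • d) := by abel
  rw [this, norm_neg, norm_smul, hd, Real.norm_eq_abs, abs_of_nonneg hs, mul_one]

/-- All interior angles are larger than a right angle, in usable form. -/
def NonNarrow (O : ConvexPolygon) : Prop :=
  ∀ v ∈ O.verts, ∃ u ∈ O.verts, ∃ w ∈ O.verts, dt (u - v) (w - v) < 0

lemma nonNarrow_of (O : ConvexPolygon) (h : ∀ v ∈ O.verts, Real.pi / 2 < O.intAngle v) :
    NonNarrow O := by
  intro v hv
  have h1 := h v hv
  unfold ConvexPolygon.intAngle at h1
  have hne : {θ | ∃ u w, O.Adj v u ∧ O.Adj v w ∧ u ≠ w ∧ θ = ∠ u v w}.Nonempty := by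
    by_contra hn
    rw [Set.not_nonempty_iff_eq_empty] at hn
    rw [hn, Real.sSup_empty] at h1
    have := Real.pi_pos
    linarith
  obtain ⟨θ, ⟨u, w, hu, hw, -, rfl⟩, hθ⟩ := exists_lt_of_lt_csSup hne h1
  refine ⟨u, hu.2.1, w, hw.2.1, ?_⟩
  by_contra hc
  push Not at hc
  rw [← inner_dt] at hc
  have : ∠ u v w ≤ Real.pi / 2 := by
    unfold EuclideanGeometry.angle InnerProductGeometry.angle
    rw [Real.arccos_le_pi_div_two]
    simp only [vsub_eq_sub]
    positivity
  linarith

lemma verts_sub_body (O : ConvexPolygon) {v : Plane} (hv : v ∈ O.verts) : v ∈ O.body :=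
  subset_convexHull ℝ _ hv

lemma verts_nonempty (O : ConvexPolygon) : O.verts.Nonempty := by
  rw [← Finset.card_pos]
  have := O.three_le_card
  omega

/-- A vertex is not a nontrivial nonnegative combination of other vertices. -/
lemma no_comb (O : ConvexPolygon) {a x y z : Plane} (ha : a ∈ O.verts) (hx : x ∈ O.verts)
    (hy : y ∈ O.verts) (hz : z ∈ O.verts) (hxa : x ≠ a) (hya : y ≠ a) (hza : z ≠ a)
    {α β γ : ℝ} (hα : 0 ≤ α) (hβ : 0 ≤ β) (hγ : 0 ≤ γ) (hs : 0 < α + β + γ)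
    (h0 : α * (x 0 - a 0) + β * (y 0 - a 0) + γ * (z 0 - a 0) = 0)
    (h1 : α * (x 1 - a 1) + β * (y 1 - a 1) + γ * (z 1 - a 1) = 0) : False := by
  apply O.strictConvexPos a ha
  have hc := convex_convexHull ℝ ((O.verts : Set Plane) \ {a})
  have mx : x ∈ convexHull ℝ ((O.verts : Set Plane) \ {a}) :=
    subset_convexHull ℝ _ ⟨hx, by simpa using hxa⟩
  have my : y ∈ convexHull ℝ ((O.verts : Set Plane) \ {a}) :=
    subset_convexHull ℝ _ ⟨hy, by simpa using hya⟩
  have mz : z ∈ convexHull ℝ ((O.verts : Set Plane) \ {a}) :=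
    subset_convexHull ℝ _ ⟨hz, by simpa using hza⟩
  have key := hc.sum_mem (t := Finset.univ) (w := ![α / (α + β + γ), β / (α + β + γ), γ / (α + β + γ)])
    (z := ![x, y, z]) (by intro i _; fin_cases i <;> simp <;> positivity)
    (by simp [Fin.sum_univ_three]; field_simp)
    (by intro i _; fin_cases i <;> simpa)
  have e : a = ∑ i, (![α / (α + β + γ), β / (α + β + γ), γ / (α + β + γ)] : Fin 3 → ℝ) i •
      (![x, y, z] : Fin 3 → Plane) i := by
    simp only [Fin.sum_univ_three, Matrix.cons_val]
    apply pl_ext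
    · simp only [pl_add, pl_smul]
      field_simp
      linarith
    · simp only [pl_add, pl_smul]
      field_simp
      linarith
  rw [← e] at key
  exact key

/-- No three distinct vertices are collinear. -/
lemma not_collinear (O : ConvexPolygon) {a b c : Plane} (ha : a ∈ O.verts) (hb : b ∈ O.verts)
    (hc : c ∈ O.verts) (hab : a ≠ b) (hac : a ≠ c) (hbc : b ≠ c) : cr (b - a) (c - a) ≠ 0 := by
  intro h
  simp only [cr, pl_sub] at h
  have hw : 0 < (b 0 - a 0) ^ 2 + (b 1 - a 1) ^ 2 := by
    by_contra hn
    apply hab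
    apply pl_ext <;> nlinarith [sq_nonneg (b 0 - a 0), sq_nonneg (b 1 - a 1)]
  set W := (b 0 - a 0) ^ 2 + (b 1 - a 1) ^ 2 with hW
  set T := (b 0 - a 0) * (c 0 - a 0) + (b 1 - a 1) * (c 1 - a 1) with hT
  have e0 : W * (c 0 - a 0) = T * (b 0 - a 0) := by
    rw [hW, hT]; linear_combination (- (b 1 - a 1)) * h
  have e1 : W * (c 1 - a 1) = T * (b 1 - a 1) := by
    rw [hW, hT]; linear_combination ((b 0 - a 0)) * h
  rcases le_or_gt T 0 with h1 | h1
  · exact no_comb O ha hb hc hc hab.symm hac.symm hac.symm (α := -T) (β := W) (γ := 0)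
      (by linarith) hw.le le_rfl (by linarith) (by linarith) (by linarith)
  rcases le_or_gt T W with h2 | h2
  · exact no_comb O hc ha hb hb hac hbc hbc (α := W - T) (β := T) (γ := 0)
      (by linarith) (by linarith) le_rfl (by linarith) (by linarith) (by linarith)
  · exact no_comb O hb ha hc hc hab hbc.symm hbc.symm (α := T - W) (β := W) (γ := 0)
      (by linarith) (by linarith) le_rfl (by linarith) (by linarith) (by linarith)

/-- The normal cone at every vertex is acute. -/
lemma normal_acute (O : ConvexPolygon) (H : NonNarrow O) {v m n : Plane} (hv : v ∈ O.verts)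
    (hm0 : dt m m ≠ 0) (hn0 : dt n n ≠ 0)
    (hm : ∀ x ∈ O.body, 0 ≤ dt m (x - v)) (hn : ∀ x ∈ O.body, 0 ≤ dt n (x - v)) : 0 < dt m n := by
  obtain ⟨u, hu, w, hw, hneg⟩ := H v hv
  have huv : v ≠ u := by rintro rfl; simp [dt] at hneg
  have hwv : v ≠ w := by rintro rfl; simp [dt] at hneg
  have huw : u ≠ w := by
    rintro rfl
    simp only [dt] at hneg
    nlinarith [mul_self_nonneg ((u - v) 0), mul_self_nonneg ((u - v) 1)]
  have hk := not_collinear O hv hu hw huv hwv huw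
  have a1 := hm u (verts_sub_body O hu)
  have b1 := hm w (verts_sub_body O hw)
  have a2 := hn u (verts_sub_body O hu)
  have b2 := hn w (verts_sub_body O hw)
  generalize u - v = U at *
  generalize w - v = Y at *
  have hU : 0 < dt U U := by
    simp only [dt, cr] at *
    by_contra hc
    have h0 : U 0 = 0 := by nlinarith [mul_self_nonneg (U 0), mul_self_nonneg (U 1)]
    have h1 : U 1 = 0 := by nlinarith [mul_self_nonneg (U 0), mul_self_nonneg (U 1)]
    apply hk; rw [h0, h1]; ring
  have hY : 0 < dt Y Y := by
    simp only [dt, cr] at *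
    by_contra hc
    have h0 : Y 0 = 0 := by nlinarith [mul_self_nonneg (Y 0), mul_self_nonneg (Y 1)]
    have h1 : Y 1 = 0 := by nlinarith [mul_self_nonneg (Y 0), mul_self_nonneg (Y 1)]
    apply hk; rw [h0, h1]; ring
  have hid : ∀ m n : Plane, (cr U Y) ^ 2 * dt m n = dt m U * dt n U * dt Y Y
      + (dt m U * dt n Y + dt m Y * dt n U) * (- dt U Y) + dt m Y * dt n Y * dt U U := by
    intro m n; simp only [cr, dt]; ring
  have hk2 : 0 < (cr U Y) ^ 2 := by positivity
  have pos : ∀ m : Plane, dt m m ≠ 0 → 0 ≤ dt m U → 0 ≤ dt m Y → 0 < dt m U ∨ 0 < dt m Y := by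
    intro m h hU' hY'
    by_contra hc
    push Not at hc
    have e1 : dt m U = 0 := by linarith
    have e2 : dt m Y = 0 := by linarith
    have := hid m m
    rw [e1, e2] at this
    apply h
    have : (cr U Y) ^ 2 * dt m m = 0 := by linarith
    rcases mul_eq_zero.1 this with h | h
    · linarith
    · exact h
  have hpos : 0 < (cr U Y) ^ 2 * dt m n := by
    rw [hid]
    have hN : 0 < - dt U Y := by linarith
    rcases pos m hm0 a1 b1 with h | h <;> rcases pos n hn0 a2 b2 with h' | h' <;> positivity
  exact (mul_pos_iff_of_pos_left hk2).1 hpos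

/-- Usable data of a probe outcome. -/
structure PD (O : ConvexPolygon) (o : Outcome) : Prop where
  unit : dt o.dir o.dir = 1
  wed1 : ∀ x ∈ O.body, 0 ≤ dt o.dir (x - o.apex)
  wed2 : ∀ x ∈ O.body, 0 ≤ cr o.dir (x - o.apex)
  arm_one : ∃ s : ℝ, 0 < s ∧ o.p₁ 0 = o.apex 0 + s * o.dir 0 ∧ o.p₁ 1 = o.apex 1 + s * o.dir 1
  arm_two : ∃ s : ℝ, 0 < s ∧ o.p₂ 0 = o.apex 0 - s * o.dir 1 ∧ o.p₂ 1 = o.apex 1 + s * o.dir 0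
  v1 : o.p₁ ∈ O.verts
  v2 : o.p₂ ∈ O.verts
  out : o.apex ∉ O.body

lemma norm_JJ {d : Plane} (hd : ‖d‖ = 1) : ‖JJ d‖ = 1 := by
  rw [norm_one_iff] at *
  rw [JJ_zero, JJ_one]; linarith

/-- The contact point closest to the apex is a vertex. -/
lemma contact_vertex (O : ConvexPolygon) {q d p : Plane} (hd : ‖d‖ = 1) {f : Plane → ℝ}
    (hf : ∀ (x y : Plane) (a b : ℝ), a + b = 1 → f (a • x + b • y) = a * f x + b * f y)
    (hf0 : ∀ x ∈ O.body, 0 ≤ f x) (hf1 : ∀ x ∈ arm1 q d, f x = 0)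
    (harm : ∀ x ∈ O.body, f x = 0 → x ∈ arm1 q d)
    (hp : ClosestOn q (arm1 q d ∩ O.body) p) : p ∈ O.verts := by
  have : p ∈ (convexHull ℝ (O.verts : Set Plane)).extremePoints ℝ := by
    rw [mem_extremePoints_iff_left]
    refine ⟨hp.1.2, ?_⟩
    rintro x hx y hy ⟨a, b, ha, hb, hab, hxy⟩
    have h1 := hf x y a b hab
    rw [hxy, hf1 p hp.1.1] at h1
    have fx : f x = 0 := by nlinarith [hf0 x hx, hf0 y hy, mul_nonneg ha.le (hf0 x hx), mul_nonneg hb.le (hf0 y hy)]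
    have fy : f y = 0 := by nlinarith [hf0 x hx, hf0 y hy, mul_nonneg ha.le (hf0 x hx), mul_nonneg hb.le (hf0 y hy)]
    obtain ⟨s, hs, es⟩ := harm x hx fx
    obtain ⟨t, ht, et⟩ := harm y hy fy
    obtain ⟨r, hr, er⟩ := hp.1.1
    have d1 := hp.2 x ⟨harm x hx fx, hx⟩
    have d2 := hp.2 y ⟨harm y hy fy, hy⟩
    rw [er, es, dist_ray q d hd _ hr, dist_ray q d hd _ hs] at d1
    rw [er, et, dist_ray q d hd _ hr, dist_ray q d hd _ ht] at d2
    have hd' := (norm_one_iff d).1 hd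
    have h0 : p 0 = a * x 0 + b * y 0 := by rw [← hxy]; rfl
    have h1 : p 1 = a * x 1 + b * y 1 := by rw [← hxy]; rfl
    rw [er, es, et] at h0 h1
    simp only [pl_add, pl_smul] at h0 h1
    have e : r = a * s + b * t := by
      have hb' : b = 1 - a := by linarith
      subst hb'
      have h0' : (r - a * s - (1 - a) * t) * d 0 = 0 := by linarith
      have h1' : (r - a * s - (1 - a) * t) * d 1 = 0 := by linarith
      have : (r - a * s - (1 - a) * t) * (d 0 * d 0 + d 1 * d 1) = 0 := by
        linear_combination d 0 * h0' + d 1 * h1'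
      rw [hd'] at this
      linarith
    have : s = r := by
      have hb' : b = 1 - a := by linarith
      subst hb'
      nlinarith
    rw [es, er, this]
  exact extremePoints_convexHull_subset this

lemma outcome_pd (O : ConvexPolygon) (H : NonNarrow O) {L : DirLine} {o : Outcome}
    (h : IsOutcome (Real.pi / 2) O L o) : PD O o := by
  obtain ⟨⟨⟨hd, hw, -, -⟩, -, -⟩, hc1, hc2⟩ := h
  have hd' := (norm_one_iff _).1 hd
  have w1 : ∀ x ∈ O.body, 0 ≤ dt o.dir (x - o.apex) := by
    intro x hx
    obtain ⟨s, t, hs, ht, rfl⟩ := hw hx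
    change 0 ≤ dt o.dir (o.apex + s • o.dir + t • JJ o.dir - o.apex)
    simp only [dt, pl_add, pl_sub, pl_smul, JJ_zero, JJ_one]
    have : o.dir 0 * (o.apex 0 + s * o.dir 0 + t * -o.dir 1 - o.apex 0) +
      o.dir 1 * (o.apex 1 + s * o.dir 1 + t * o.dir 0 - o.apex 1) = s := by
      linear_combination s * hd'
    linarith
  have w2 : ∀ x ∈ O.body, 0 ≤ cr o.dir (x - o.apex) := by
    intro x hx
    obtain ⟨s, t, hs, ht, rfl⟩ := hw hx
    change 0 ≤ cr o.dir (o.apex + s • o.dir + t • JJ o.dir - o.apex)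
    simp only [cr, pl_add, pl_sub, pl_smul, JJ_zero, JJ_one]
    have : o.dir 0 * (o.apex 1 + s * o.dir 1 + t * o.dir 0 - o.apex 1) -
      o.dir 1 * (o.apex 0 + s * o.dir 0 + t * -o.dir 1 - o.apex 0) = t := by
      linear_combination t * hd'
    linarith
  have hv1 : o.p₁ ∈ O.verts := by
    refine contact_vertex O hd (f := fun x => cr o.dir (x - o.apex)) ?_ w2 ?_ ?_ hc1
    · intro x y a b hab
      simp only [cr, pl_add, pl_sub, pl_smul]
      have : b = 1 - a := by linarith
      subst this; ring
    · rintro x ⟨t, ht, rfl⟩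
      simp only [cr, pl_add, pl_sub, pl_smul]; ring
    · intro x hx hf
      refine ⟨_, w1 x hx, ?_⟩
      simp only [cr, dt, pl_sub] at *
      apply pl_ext <;> simp only [pl_add, pl_smul]
      · linear_combination (- o.dir 1) * hf - (x 0 - o.apex 0) * hd'
      · linear_combination (o.dir 0) * hf - (x 1 - o.apex 1) * hd'
  have hv2 : o.p₂ ∈ O.verts := by
    refine contact_vertex O (norm_JJ hd) (f := fun x => dt o.dir (x - o.apex)) ?_ w1 ?_ ?_ hc2
    · intro x y a b hab
      simp only [dt, pl_add, pl_sub, pl_smul]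
      have : b = 1 - a := by linarith
      subst this; ring
    · rintro x ⟨t, ht, rfl⟩
      simp only [dt, pl_add, pl_sub, pl_smul, JJ_zero, JJ_one]; ring
    · intro x hx hf
      refine ⟨_, w2 x hx, ?_⟩
      simp only [cr, dt, pl_sub] at *
      apply pl_ext <;> simp only [pl_add, pl_smul, JJ_zero, JJ_one]
      · linear_combination (o.dir 0) * hf - (x 0 - o.apex 0) * hd'
      · linear_combination (o.dir 1) * hf - (x 1 - o.apex 1) * hd'
  have hnv : o.apex ∉ O.verts := by
    intro hq
    obtain ⟨u, hu, w, hw, hneg⟩ := H _ hq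
    have a1 := w1 u (verts_sub_body O hu)
    have a2 := w2 u (verts_sub_body O hu)
    have b1 := w1 w (verts_sub_body O hw)
    have b2 := w2 w (verts_sub_body O hw)
    have : dt (u - o.apex) (w - o.apex) = dt o.dir (u - o.apex) * dt o.dir (w - o.apex)
        + cr o.dir (u - o.apex) * cr o.dir (w - o.apex) := by
      simp only [dt, cr]
      linear_combination (-((u - o.apex) 0 * (w - o.apex) 0 + (u - o.apex) 1 * (w - o.apex) 1)) * hd'
    have := mul_nonneg a1 b1
    have := mul_nonneg a2 b2
    linarith
  obtain ⟨s, hs, es⟩ := hc1.1.1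
  obtain ⟨t, ht, et⟩ := hc2.1.1
  change o.p₂ = o.apex + t • JJ o.dir at et
  have hs' : s ≠ 0 := by rintro rfl; apply hnv; simpa [es] using hv1
  have ht' : t ≠ 0 := by rintro rfl; apply hnv; simpa [et] using hv2
  refine ⟨hd', w1, w2, ⟨s, lt_of_le_of_ne hs hs'.symm, ?_, ?_⟩, ⟨t, lt_of_le_of_ne ht ht'.symm, ?_, ?_⟩,
    hv1, hv2, ?_⟩
  · rw [es]; rfl
  · rw [es]; rfl
  · rw [et]; simp only [pl_add, pl_smul, JJ_zero]; ring
  · rw [et]; simp only [pl_add, pl_smul, JJ_one]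
  · intro hq
    have hc0 : dist o.apex o.p₁ ≤ dist o.apex o.apex := hc1.2 _ ⟨⟨0, le_rfl, by simp⟩, hq⟩
    rw [dist_self, es, dist_ray _ _ hd _ hs] at hc0
    exact hs' (le_antisymm hc0 hs)

/-- Support function (minimum) of the vertices. -/
def supp (O : ConvexPolygon) (d : Plane) : ℝ :=
  O.verts.inf' (verts_nonempty O) (fun v => dt v d)

lemma supp_le (O : ConvexPolygon) (d : Plane) {x : Plane} (hx : x ∈ O.body) :
    supp O d ≤ dt x d := by
  have : O.body ⊆ {x | supp O d ≤ dt x d} := by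
    apply convexHull_min
    · intro v hv
      exact Finset.inf'_le (fun v => dt v d) hv
    · intro x hx y hy a b ha hb hab
      simp only [Set.mem_ofPred_eq] at *
      have : dt (a • x + b • y) d = a * dt x d + b * dt y d := by
        simp only [dt, pl_add, pl_smul]; ring
      rw [this]
      have : b = 1 - a := by linarith
      subst this
      nlinarith [mul_nonneg ha (sub_nonneg.2 hx), mul_nonneg hb (sub_nonneg.2 hy)]
  exact this hx

lemma supp_att (O : ConvexPolygon) (d : Plane) : ∃ v ∈ O.verts, dt v d = supp O d := by
  obtain ⟨v, hv, h⟩ := Finset.exists_mem_eq_inf' (verts_nonempty O) (fun v => dt v d)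
  exact ⟨v, hv, h.symm⟩

/-- There is a valid probe along each directed line through a point of the polygon. -/
lemma exists_probe (O : ConvexPolygon) (L : DirLine) (hL : L.pt ∈ O.body) :
    ∃ q d, IsValidProbeAlong (Real.pi / 2) O L q d := by
  set u := L.dir with hu
  have hun := (norm_one_iff _).1 L.norm_dir
  rw [← hu] at hun
  set D : ℝ → Plane := fun t => !₂[Real.cos t * u 0 + Real.sin t * u 1,
    Real.cos t * u 1 - Real.sin t * u 0] with hD
  have D0 : ∀ t, D t 0 = Real.cos t * u 0 + Real.sin t * u 1 := fun t => rfl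
  have D1 : ∀ t, D t 1 = Real.cos t * u 1 - Real.sin t * u 0 := fun t => rfl
  have c1 : Continuous fun t => supp O (D t) := by
    unfold supp
    apply Continuous.finset_inf'_apply
    intro v _
    simp only [dt, D0, D1]
    fun_prop
  have c2 : Continuous fun t => supp O (JJ (D t)) := by
    unfold supp
    apply Continuous.finset_inf'_apply
    intro v _
    simp only [dt, JJ_zero, JJ_one, D0, D1]
    fun_prop
  have hg : Continuous fun t => - Real.sin t * supp O (D t) + Real.cos t * supp O (JJ (D t)) := by
    fun_prop
  have hivt := intermediate_value_Icc (a := 0) (b := Real.pi / 2) (by positivity) hg.continuousOn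
  have hmem : dt L.pt (JJ u) ∈ (fun t => - Real.sin t * supp O (D t) +
      Real.cos t * supp O (JJ (D t))) '' Set.Icc 0 (Real.pi / 2) := by
    apply hivt
    constructor
    · simp only [Real.sin_zero, Real.cos_zero]
      have h := supp_le O (JJ (D 0)) hL
      have : dt L.pt (JJ (D 0)) = dt L.pt (JJ u) := by
        simp only [dt, JJ_zero, JJ_one, D0, D1, Real.sin_zero, Real.cos_zero]; ring
      linarith
    · simp only [Real.sin_pi_div_two, Real.cos_pi_div_two]
      have h := supp_le O (D (Real.pi / 2)) hL
      have : dt L.pt (D (Real.pi / 2)) = - dt L.pt (JJ u) := by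
        simp only [dt, JJ_zero, JJ_one, D0, D1, Real.sin_pi_div_two, Real.cos_pi_div_two]; ring
      linarith
  obtain ⟨t, ⟨ht0, ht1⟩, hg⟩ := hmem
  simp only at hg
  have hs : 0 ≤ Real.sin t := Real.sin_nonneg_of_nonneg_of_le_pi ht0 (by linarith [Real.pi_pos])
  have hc : 0 ≤ Real.cos t := Real.cos_nonneg_of_neg_pi_div_two_le_of_le (by linarith [Real.pi_pos]) ht1
  have hsc := Real.sin_sq_add_cos_sq t
  have e0 := D0 t
  have e1 := D1 t
  set d := D t with hd
  clear_value d
  clear hD c1 c2 hivt D0 D1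
  have hdd : d 0 * d 0 + d 1 * d 1 = 1 := by
    rw [e0, e1]
    linear_combination (u 0 * u 0 + u 1 * u 1) * hsc + hun
  set q : Plane := supp O d • d + supp O (JJ d) • JJ d with hq
  have q0 : q 0 = supp O d * d 0 - supp O (JJ d) * d 1 := by
    rw [hq]; simp only [pl_add, pl_smul, JJ_zero]; ring
  have q1 : q 1 = supp O d * d 1 + supp O (JJ d) * d 0 := by
    rw [hq]; simp only [pl_add, pl_smul, JJ_one]
  have dec : ∀ x : Plane, x = q + (dt x d - supp O d) • d + (dt x (JJ d) - supp O (JJ d)) • JJ d := by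
    intro x
    apply pl_ext <;> simp only [pl_add, pl_smul, JJ_zero, JJ_one, dt, q0, q1]
    · linear_combination (-x 0) * hdd
    · linear_combination (-x 1) * hdd
  refine ⟨q, d, ⟨(norm_one_iff _).2 hdd, ?_, ?_, ?_⟩, ?_, ?_⟩
  · intro x hx
    exact ⟨_, _, sub_nonneg.2 (supp_le O d hx), sub_nonneg.2 (supp_le O (JJ d) hx), dec x⟩
  · obtain ⟨v, hv, e⟩ := supp_att O (JJ d)
    refine ⟨v, ⟨_, sub_nonneg.2 (supp_le O d (verts_sub_body O hv)), ?_⟩, verts_sub_body O hv⟩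
    have := dec v
    rw [e, sub_self, zero_smul, add_zero] at this
    exact this
  · obtain ⟨v, hv, e⟩ := supp_att O d
    refine ⟨v, ⟨_, sub_nonneg.2 (supp_le O (JJ d) (verts_sub_body O hv)), ?_⟩, verts_sub_body O hv⟩
    have := dec v
    rw [e, sub_self, zero_smul, add_zero] at this
    exact this
  all_goals
    have hg' : (q 1 - L.pt 1) * u 0 - (q 0 - L.pt 0) * u 1 = 0 := by
      simp only [dt, JJ_zero, JJ_one] at hg
      rw [q0, q1]
      have a1 : d 1 * u 0 - d 0 * u 1 = - Real.sin t := by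
        rw [e0, e1]; linear_combination (- Real.sin t) * hun
      have a2 : d 0 * u 0 + d 1 * u 1 = Real.cos t := by
        rw [e0, e1]; linear_combination (Real.cos t) * hun
      linear_combination hg + supp O d * a1 + supp O (JJ d) * a2
    have hq' : q = L.pt + (dt (q - L.pt) u) • L.dir := by
      rw [← hu]
      apply pl_ext <;> simp only [pl_add, pl_smul, pl_sub, dt]
      · linear_combination (-u 1) * hg' - (q 0 - L.pt 0) * hun
      · linear_combination (u 0) * hg' - (q 1 - L.pt 1) * hun
  · exact ⟨_, hq'⟩
  · refine ⟨- dt (q - L.pt) u, ?_, ?_⟩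
    · have h1 := supp_le O d hL
      have h2 := supp_le O (JJ d) hL
      have : - dt (q - L.pt) u = Real.cos t * (dt L.pt d - supp O d) +
          Real.sin t * (dt L.pt (JJ d) - supp O (JJ d)) := by
        have u0 : u 0 = Real.cos t * d 0 - Real.sin t * d 1 := by
          rw [e0, e1]; linear_combination (- u 0) * hsc
        have u1 : u 1 = Real.cos t * d 1 + Real.sin t * d 0 := by
          rw [e0, e1]; linear_combination (- u 1) * hsc
        simp only [dt, pl_sub, q0, q1, u0, u1, JJ_zero, JJ_one]
        linear_combination (- Real.cos t * supp O d - Real.sin t * supp O (JJ d)) * hdd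
      rw [this]
      have := mul_nonneg hc (sub_nonneg.2 h1)
      have := mul_nonneg hs (sub_nonneg.2 h2)
      linarith
    · have : q + (- dt (q - L.pt) u) • L.dir = L.pt := by
        nth_rewrite 1 [hq']
        rw [neg_smul]; abel
      rw [this]; exact hL

lemma norm_e : ‖(!₂[1, 0] : Plane)‖ = 1 := by
  rw [norm_one_iff]; simp

open Classical in
/-- The directed line from `a` to `b`. -/
def thru (a b : Plane) : DirLine :=
  if h : a ≠ b then ⟨a, ‖b - a‖⁻¹ • (b - a), by
    rw [norm_smul, norm_inv, norm_norm]
    exact inv_mul_cancel₀ (norm_ne_zero_iff.2 (sub_ne_zero.2 h.symm))⟩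
  else ⟨a, !₂[1, 0], norm_e⟩

lemma thru_pt (a b : Plane) : (thru a b).pt = a := by
  unfold thru; split_ifs <;> rfl

lemma thru_dir {a b : Plane} (h : a ≠ b) : (thru a b).dir = ‖b - a‖⁻¹ • (b - a) := by
  unfold thru; rw [dif_pos h]

/-- Geometry of a probe along the line from `a` to `b`. -/
lemma along (O : ConvexPolygon) (H : NonNarrow O) {a b : Plane} (ha : a ∈ O.body)
    (hab : a ≠ b) {o : Outcome}
    (h : IsOutcome (Real.pi / 2) O (thru a b) o) :
    (∃ σ : ℝ, 0 < σ ∧ o.apex 0 = a 0 - σ * (b 0 - a 0) ∧ o.apex 1 = a 1 - σ * (b 1 - a 1)) ∧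
    0 ≤ dt o.dir (b - a) ∧ 0 ≤ cr o.dir (b - a) := by
  have P := outcome_pd O H h
  obtain ⟨⟨-, ⟨τ, hτ⟩, t, ht, htO⟩, -, -⟩ := h
  rw [thru_pt, thru_dir hab] at hτ
  rw [thru_dir hab] at htO
  have hN : 0 < ‖b - a‖⁻¹ := inv_pos.2 (norm_pos_iff.2 (sub_ne_zero.2 hab.symm))
  set N := ‖b - a‖⁻¹
  have ht' : 0 < t := by
    rcases ht.lt_or_eq with h | h
    · exact h
    · rw [← h, zero_smul, add_zero] at htO; exact absurd htO P.out
  have hτ0 := congrArg (fun x : Plane => x 0) hτ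
  have hτ1 := congrArg (fun x : Plane => x 1) hτ
  simp only [pl_add, pl_smul, pl_sub] at hτ0 hτ1
  have x1 := P.wed1 _ htO
  have x2 := P.wed2 _ htO
  have y1 : 0 ≤ dt o.dir (b - a) := by
    have : dt o.dir (o.apex + t • N • (b - a) - o.apex) = (t * N) * dt o.dir (b - a) := by
      simp only [dt, pl_add, pl_smul, pl_sub]; ring
    rw [this] at x1
    exact nonneg_of_mul_nonneg_right x1 (by positivity)
  have y2 : 0 ≤ cr o.dir (b - a) := by
    have : cr o.dir (o.apex + t • N • (b - a) - o.apex) = (t * N) * cr o.dir (b - a) := by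
      simp only [cr, pl_add, pl_smul, pl_sub]; ring
    rw [this] at x2
    exact nonneg_of_mul_nonneg_right x2 (by positivity)
  refine ⟨⟨- (τ * N), ?_, by rw [hτ0]; ring, by rw [hτ1]; ring⟩, y1, y2⟩
  have z1 := P.wed1 _ ha
  have z2 := P.wed2 _ ha
  have g1 : dt o.dir (a - o.apex) = (- (τ * N)) * dt o.dir (b - a) := by
    simp only [dt, pl_sub, hτ0, hτ1]; ring
  have g2 : cr o.dir (a - o.apex) = (- (τ * N)) * cr o.dir (b - a) := by
    simp only [cr, pl_sub, hτ0, hτ1]; ring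
  rw [g1] at z1
  rw [g2] at z2
  by_contra hc
  push Not at hc
  have hτne : - (τ * N) ≠ 0 := by
    intro h0
    have : τ = 0 := by
      rcases mul_eq_zero.1 (neg_eq_zero.1 h0) with h | h
      · exact h
      · exact absurd h hN.ne'
    rw [this, zero_smul, add_zero] at hτ
    exact P.out (hτ ▸ ha)
  have hlt : - (τ * N) < 0 := lt_of_le_of_ne hc hτne
  have k1 : dt o.dir (b - a) = 0 := by nlinarith
  have k2 : cr o.dir (b - a) = 0 := by nlinarith
  have hd := P.unit
  apply hab
  simp only [dt, cr, pl_sub] at k1 k2 hd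
  apply pl_ext
  · linear_combination (-o.dir 0) * k1 + o.dir 1 * k2 + (b 0 - a 0) * hd
  · linear_combination (-o.dir 1) * k1 - o.dir 0 * k2 + (b 1 - a 1) * hd

/-- The outcome shows that the polygon lies to the left of the line from `a` to `b`. -/
def Flush (o : Outcome) (a b : Plane) : Prop :=
  (cr o.dir (a - o.apex) = 0 ∧ cr o.dir (b - o.apex) = 0 ∧ 0 < dt o.dir (b - a)) ∨
  (dt o.dir (a - o.apex) = 0 ∧ dt o.dir (b - o.apex) = 0 ∧ cr o.dir (b - a) < 0)

lemma flush_left {O : ConvexPolygon} {o : Outcome} (P : PD O o) {a b : Plane} (h : Flush o a b) :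
    ∀ x ∈ O.body, 0 ≤ cr (b - a) (x - a) := by
  intro x hx
  have w1 := P.wed1 x hx
  have w2 := P.wed2 x hx
  have hd := P.unit
  rcases h with ⟨h1, h2, h3⟩ | ⟨h1, h2, h3⟩
  · have h4 : cr (b - a) (x - a) = dt o.dir (b - a) * cr o.dir (x - o.apex) := by
      simp only [cr, dt, pl_sub] at *
      linear_combination (- ((b 0 - a 0) * (x 1 - a 1) - (b 1 - a 1) * (x 0 - a 0))) * hd + (o.dir 0 * (x 0 - a 0) + o.dir 1 * (x 1 - a 1)) * (h1 - h2) - (o.dir 0 * (b 0 - a 0) + o.dir 1 * (b 1 - a 1)) * h1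
    rw [h4]; positivity
  · have h4 : cr (b - a) (x - a) = (- cr o.dir (b - a)) * dt o.dir (x - o.apex) := by
      simp only [cr, dt, pl_sub] at *
      linear_combination (- ((b 0 - a 0) * (x 1 - a 1) - (b 1 - a 1) * (x 0 - a 0))) * hd + (o.dir 0 * (x 1 - a 1) - o.dir 1 * (x 0 - a 0)) * (h2 - h1) + (o.dir 0 * (b 1 - a 1) - o.dir 1 * (b 0 - a 0)) * h1
    rw [h4]
    have : 0 < - cr o.dir (b - a) := by linarith
    positivity

lemma PD.n1 {O : ConvexPolygon} {o : Outcome} (P : PD O o) :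
    ∀ x ∈ O.body, 0 ≤ dt (JJ o.dir) (x - o.p₁) := by
  intro x hx
  obtain ⟨s, -, e0, e1⟩ := P.arm_one
  have := P.wed2 x hx
  simp only [dt, cr, JJ_zero, JJ_one, pl_sub, e0, e1] at *
  linarith

lemma PD.n2 {O : ConvexPolygon} {o : Outcome} (P : PD O o) :
    ∀ x ∈ O.body, 0 ≤ dt o.dir (x - o.p₂) := by
  intro x hx
  obtain ⟨s, -, e0, e1⟩ := P.arm_two
  have := P.wed1 x hx
  simp only [dt, cr, pl_sub, e0, e1] at *
  linarith

lemma PD.ne {O : ConvexPolygon} {o : Outcome} (P : PD O o) : o.p₁ ≠ o.p₂ := by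
  intro h
  obtain ⟨s, hs, e0, e1⟩ := P.arm_one
  obtain ⟨t, ht, f0, f1⟩ := P.arm_two
  have hd := P.unit
  rw [h, f0] at e0
  rw [h, f1] at e1
  simp only [dt] at hd
  have : s = 0 := by linear_combination (-s) * hd - o.dir 0 * e0 - o.dir 1 * e1
  linarith

lemma cr_dt_zero {d v : Plane} (hd : dt d d = 1) (h1 : dt d v = 0) (h2 : cr d v = 0) :
    v 0 = 0 ∧ v 1 = 0 := by
  simp only [dt, cr] at *
  constructor
  · linear_combination d 0 * h1 - d 1 * h2 - v 0 * hd
  · linear_combination d 1 * h1 + d 0 * h2 - v 1 * hd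

/-- Sides of the contact points of a probe along the line from `a` to `b`. -/
lemma sides (O : ConvexPolygon) (H : NonNarrow O) {a b : Plane} (ha : a ∈ O.body)
    (hab : a ≠ b) {o : Outcome} (h : IsOutcome (Real.pi / 2) O (thru a b) o) :
    (0 < cr o.dir (b - a) → cr (b - a) (o.p₁ - a) < 0) ∧
    (cr (b - a) (o.p₁ - a) < 0 ∨ Flush o a b) ∧
    (0 < cr (b - a) (o.p₂ - a) ∨ Flush o b a) := by
  have P := outcome_pd O H h
  obtain ⟨⟨σ, hσ, q0, q1⟩, hl, hm⟩ := along O H ha hab h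
  obtain ⟨s, hs, e0, e1⟩ := P.arm_one
  obtain ⟨t, ht, f0, f1⟩ := P.arm_two
  have k1 : cr (b - a) (o.p₁ - a) = - (s * cr o.dir (b - a)) := by
    simp only [cr, pl_sub, e0, e1, q0, q1]; ring
  have k2 : cr (b - a) (o.p₂ - a) = t * dt o.dir (b - a) := by
    simp only [cr, dt, pl_sub, f0, f1, q0, q1]; ring
  have hnz : ¬ (dt o.dir (b - a) = 0 ∧ cr o.dir (b - a) = 0) := by
    rintro ⟨h1, h2⟩
    obtain ⟨z0, z1⟩ := cr_dt_zero P.unit h1 h2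
    simp only [pl_sub] at z0 z1
    exact hab (pl_ext (by linarith) (by linarith))
  have r : 0 < cr o.dir (b - a) → cr (b - a) (o.p₁ - a) < 0 := by
    intro h
    rw [k1]
    have := mul_pos hs h
    linarith
  refine ⟨r, ?_, ?_⟩
  · rcases hm.lt_or_eq with h | h
    · exact Or.inl (r h)
    · right; left
      have hl' : 0 < dt o.dir (b - a) := lt_of_le_of_ne hl (fun h' => hnz ⟨h'.symm, h.symm⟩)
      refine ⟨?_, ?_, hl'⟩
      · simp only [cr, pl_sub, q0, q1] at *; linear_combination (-σ) * h
      · simp only [cr, pl_sub, q0, q1] at *; linear_combination (-σ - 1) * h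
  · rcases hl.lt_or_eq with h | h
    · left; rw [k2]; positivity
    · right; right
      have hm' : 0 < cr o.dir (b - a) := lt_of_le_of_ne hm (fun h' => hnz ⟨h.symm, h'.symm⟩)
      refine ⟨?_, ?_, ?_⟩
      · simp only [dt, pl_sub, q0, q1] at *; linear_combination (-σ - 1) * h
      · simp only [dt, pl_sub, q0, q1] at *; linear_combination (-σ) * h
      · simp only [cr, pl_sub] at *; linarith

/-- The first three probes. -/
lemma start (O : ConvexPolygon) (H : NonNarrow O) {L : DirLine} {o1 o2 o3 : Outcome}
    (h1 : IsOutcome (Real.pi / 2) O L o1)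
    (h2 : IsOutcome (Real.pi / 2) O (thru o1.p₁ o1.p₂) o2)
    (h3 : IsOutcome (Real.pi / 2) O (thru o2.p₁ o1.p₁) o3) :
    o1.p₁ ≠ o1.p₂ ∧ o2.p₁ ≠ o1.p₁ ∧ o2.p₁ ≠ o1.p₂ ∧
    o3.p₁ ≠ o1.p₁ ∧ o3.p₁ ≠ o1.p₂ ∧ o3.p₁ ≠ o2.p₁ ∧
    ((o2.p₂ ≠ o1.p₁ ∧ o2.p₂ ≠ o1.p₂ ∧ o2.p₂ ≠ o2.p₁ ∧ o2.p₂ ≠ o3.p₁ ∧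
      ((o3.p₂ ≠ o1.p₁ ∧ o3.p₂ ≠ o1.p₂ ∧ o3.p₂ ≠ o2.p₁ ∧ o3.p₂ ≠ o3.p₁ ∧ o3.p₂ ≠ o2.p₂) ∨
        Flush o3 o1.p₁ o2.p₁)) ∨
     (Flush o2 o1.p₂ o1.p₁ ∧
      ((o3.p₂ ≠ o1.p₁ ∧ o3.p₂ ≠ o1.p₂ ∧ o3.p₂ ≠ o2.p₁ ∧ o3.p₂ ≠ o3.p₁) ∨
        Flush o3 o1.p₁ o2.p₁))) := by
  have P1 := outcome_pd O H h1
  have P2 := outcome_pd O H h2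
  have P3 := outcome_pd O H h3
  have BA := P1.ne
  have mA := verts_sub_body O P1.v2
  have mB := verts_sub_body O P1.v1
  have mx := verts_sub_body O P2.v1
  have mc := verts_sub_body O P2.v2
  have my := verts_sub_body O P3.v1
  have mz := verts_sub_body O P3.v2
  obtain ⟨⟨σ, hσ, q20, q21⟩, hl2, hm2⟩ := along O H mB BA h2
  obtain ⟨S2, -, S2'⟩ := sides O H mB BA h2
  obtain ⟨s1, hs1, B0, B1⟩ := P1.arm_one
  obtain ⟨t1, ht1, A0, A1⟩ := P1.arm_two
  obtain ⟨s2, hs2, x0, x1⟩ := P2.arm_one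
  obtain ⟨t2, ht2, c0, c1⟩ := P2.arm_two
  have u1 := P1.unit
  have u2 := P2.unit
  have u3 := P3.unit
  -- direction of the second probe
  have r2 : 0 < cr o1.dir o2.dir := by
    have h := P1.wed2 _ mx
    have e : cr o1.dir (o2.p₁ - o1.apex) = s2 * cr o1.dir o2.dir - σ * t1 := by
      simp only [cr, dt, pl_sub, x0, x1, q20, q21, B0, B1, A0, A1] at *
      linear_combination (- σ * t1) * u1
    rw [e] at h
    have : 0 < σ * t1 := by positivity
    have : 0 < s2 * cr o1.dir o2.dir := by linarith
    exact (mul_pos_iff_of_pos_left hs2).1 this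
  have p2 : 0 < dt o1.dir o2.dir := by
    have h := P1.wed2 _ mc
    have e : cr o1.dir (o2.p₂ - o1.apex) = t2 * dt o1.dir o2.dir - σ * t1 := by
      simp only [cr, dt, pl_sub, c0, c1, q20, q21, B0, B1, A0, A1] at *
      linear_combination (- σ * t1) * u1
    rw [e] at h
    have : 0 < σ * t1 := by positivity
    have : 0 < t2 * dt o1.dir o2.dir := by linarith
    exact (mul_pos_iff_of_pos_left ht2).1 this
  have μ2 : 0 < cr o2.dir (o1.p₂ - o1.p₁) := by
    have e : cr o2.dir (o1.p₂ - o1.p₁) = t1 * dt o1.dir o2.dir + s1 * cr o1.dir o2.dir := by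
      simp only [cr, dt, pl_sub, B0, B1, A0, A1]
      ring
    rw [e]; positivity
  have xR := S2 μ2
  have xB : o2.p₁ ≠ o1.p₁ := by
    intro h; rw [h] at xR; simp [cr] at xR
  have xA : o2.p₁ ≠ o1.p₂ := by
    intro h; rw [h] at xR; simp only [cr] at xR; linarith
  -- the third probe
  obtain ⟨⟨τ, hτ, q30, q31⟩, hl3, hm3⟩ := along O H mx xB h3
  obtain ⟨S3, -, S3'⟩ := sides O H mx xB h3
  obtain ⟨s3, hs3, y0, y1⟩ := P3.arm_one
  obtain ⟨t3, ht3, z0, z1⟩ := P3.arm_two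
  have eB : cr o2.dir (o1.p₁ - o2.p₁) = σ * cr o2.dir (o1.p₂ - o1.p₁) := by
    simp only [cr, pl_sub, x0, x1, q20, q21]; ring
  have r3 : 0 < cr o2.dir o3.dir := by
    have h := P2.wed2 _ my
    have e : cr o2.dir (o3.p₁ - o2.apex) = s3 * cr o2.dir o3.dir
        - τ * (cr o2.dir (o1.p₁ - o2.p₁)) := by
      simp only [cr, pl_sub, y0, y1, q30, q31]
      linear_combination o2.dir 0 * x1 - o2.dir 1 * x0
    rw [e, eB] at h
    have : 0 < τ * (σ * cr o2.dir (o1.p₂ - o1.p₁)) := by positivity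
    have : 0 < s3 * cr o2.dir o3.dir := by linarith
    exact (mul_pos_iff_of_pos_left hs3).1 this
  have p3 : 0 < dt o2.dir o3.dir := by
    have h := P2.wed2 _ mz
    have e : cr o2.dir (o3.p₂ - o2.apex) = t3 * dt o2.dir o3.dir
        - τ * (cr o2.dir (o1.p₁ - o2.p₁)) := by
      simp only [cr, dt, pl_sub, z0, z1, q30, q31]
      linear_combination o2.dir 0 * x1 - o2.dir 1 * x0
    rw [e, eB] at h
    have : 0 < τ * (σ * cr o2.dir (o1.p₂ - o1.p₁)) := by positivity
    have : 0 < t3 * dt o2.dir o3.dir := by linarith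
    exact (mul_pos_iff_of_pos_left ht3).1 this
  have r13 : 0 < cr o1.dir o3.dir := by
    have e : cr o1.dir o3.dir = dt o2.dir o3.dir * cr o1.dir o2.dir
        + cr o2.dir o3.dir * dt o1.dir o2.dir := by
      simp only [cr, dt] at *
      linear_combination (- (o1.dir 0 * o3.dir 1 - o1.dir 1 * o3.dir 0)) * u2
    rw [e]; positivity
  have μ3 : 0 < cr o3.dir (o1.p₁ - o2.p₁) := by
    rcases hm3.lt_or_eq with h | h
    · exact h
    · exfalso
      have h4 := P1.wed2 _ mx
      have e1 : cr o1.dir (o2.p₁ - o1.apex) = - cr o1.dir (o1.p₁ - o2.p₁) := by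
        simp only [cr, pl_sub]
        linear_combination o1.dir 0 * B1 - o1.dir 1 * B0
      have e2 : cr o1.dir (o1.p₁ - o2.p₁) = dt o3.dir (o1.p₁ - o2.p₁) * cr o1.dir o3.dir := by
        simp only [cr, dt] at *
        linear_combination (- (o1.dir 0 * (o1.p₁ - o2.p₁) 1 - o1.dir 1 * (o1.p₁ - o2.p₁) 0)) * u3
          - (o1.dir 0 * o3.dir 0 + o1.dir 1 * o3.dir 1) * h
      have e3 : dt o3.dir (o1.p₁ - o2.p₁) = 0 := by
        apply le_antisymm _ hl3
        by_contra hc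
        push Not at hc
        have := mul_pos hc r13
        linarith
      obtain ⟨g0, g1⟩ := cr_dt_zero u3 e3 h.symm
      simp only [pl_sub] at g0 g1
      exact xB (pl_ext (by linarith) (by linarith))
  have yR := S3 μ3
  have d0 : ∀ d : Plane, dt d d = 1 → dt d d ≠ 0 := by intro d h; rw [h]; norm_num
  have dJ : ∀ d : Plane, dt d d = 1 → dt (JJ d) (JJ d) ≠ 0 := by
    intro d h
    have : dt (JJ d) (JJ d) = dt d d := by simp only [dt, JJ_zero, JJ_one]; ring
    rw [this, h]; norm_num
  have yA : o3.p₁ ≠ o1.p₂ := by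
    intro h
    have n := P3.n1
    rw [h] at n
    have := normal_acute O H P1.v2 (d0 _ u1) (dJ _ u3) P1.n2 n
    simp only [dt, JJ_zero, JJ_one, cr] at this r13
    linarith
  have yc : o2.p₂ ≠ o3.p₁ := by
    intro h
    have n := P3.n1
    rw [← h] at n
    have := normal_acute O H P2.v2 (d0 _ u2) (dJ _ u3) P2.n2 n
    simp only [dt, JJ_zero, JJ_one, cr] at this r3
    linarith
  have yx : o3.p₁ ≠ o2.p₁ := by
    intro h; rw [h] at yR; simp [cr] at yR
  have yB : o3.p₁ ≠ o1.p₁ := by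
    intro h; rw [h] at yR; simp only [cr] at yR; linarith
  have AR : cr (o1.p₁ - o2.p₁) (o1.p₂ - o2.p₁) < 0 := by
    simp only [cr, pl_sub] at *; linarith
  have Z : 0 < cr (o1.p₁ - o2.p₁) (o3.p₂ - o2.p₁) →
      o3.p₂ ≠ o1.p₁ ∧ o3.p₂ ≠ o1.p₂ ∧ o3.p₂ ≠ o2.p₁ ∧ o3.p₂ ≠ o3.p₁ := by
    intro h
    refine ⟨?_, ?_, ?_, ?_⟩ <;> intro h' <;> rw [h'] at h
    · simp only [cr] at h; linarith
    · linarith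
    · simp [cr] at h
    · linarith
  refine ⟨BA, xB, xA, yB, yA, yx, ?_⟩
  rcases S2' with hc | hc
  · left
    have cB : o2.p₂ ≠ o1.p₁ := by
      intro h; rw [h] at hc; simp [cr] at hc
    have cA : o2.p₂ ≠ o1.p₂ := by
      intro h; rw [h] at hc; simp only [cr] at hc; linarith
    have cx : o2.p₂ ≠ o2.p₁ := by
      intro h; rw [h] at hc; linarith
    refine ⟨cB, cA, cx, yc, ?_⟩
    rcases S3' with hz | hz
    · left
      obtain ⟨z1, z2, z3, z4⟩ := Z hz
      refine ⟨z1, z2, z3, z4, ?_⟩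
      intro h
      rw [h] at hz
      refine no_comb O P1.v1 P1.v2 P2.v1 P2.v2 BA.symm xB cB
        (α := - cr (o2.p₁ - o1.p₁) (o2.p₂ - o1.p₁)) (β := cr (o1.p₂ - o1.p₁) (o2.p₂ - o1.p₁))
        (γ := - cr (o1.p₂ - o1.p₁) (o2.p₁ - o1.p₁)) ?_ hc.le (by linarith) ?_ ?_ ?_
      · simp only [cr, pl_sub] at *; linarith
      · have : 0 ≤ - cr (o2.p₁ - o1.p₁) (o2.p₂ - o1.p₁) := by
          simp only [cr, pl_sub] at *; linarith
        linarith
      · simp only [cr, pl_sub]; ring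
      · simp only [cr, pl_sub]; ring
    · right; exact hz
  · right
    refine ⟨hc, ?_⟩
    rcases S3' with hz | hz
    · left; exact Z hz
    · right; exact hz

open Classical in
/-- The vertices discovered so far. -/
def known (l : List Answer) : Finset Plane :=
  (l.flatMap fun a => match a with
    | none => []
    | some o => [o.p₁, o.p₂]).toFinset

lemma mem_known {l : List Answer} {x : Plane} :
    x ∈ known l ↔ ∃ o, some o ∈ l ∧ (x = o.p₁ ∨ x = o.p₂) := by
  unfold known
  simp only [List.mem_toFinset, List.mem_flatMap]
  constructor
  · rintro ⟨a, ha, hx⟩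
    cases a with
    | none => simp at hx
    | some o => exact ⟨o, ha, by simpa using hx⟩
  · rintro ⟨o, ho, hx⟩
    exact ⟨some o, ho, by simpa using hx⟩

open Classical in
/-- The edges verified so far. -/
def verified (l : List Answer) : Finset (Plane × Plane) :=
  (known l ×ˢ known l).filter fun e => e.1 ≠ e.2 ∧ ∃ o, some o ∈ l ∧ Flush o e.1 e.2

lemma mem_verified {l : List Answer} {a b : Plane} :
    (a, b) ∈ verified l ↔ a ∈ known l ∧ b ∈ known l ∧ a ≠ b ∧ ∃ o, some o ∈ l ∧ Flush o a b := by
  unfold verified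
  simp only [Finset.mem_filter, Finset.mem_product, and_assoc]

/-- An unverified edge of the hull of the known vertices. -/
def Gap (l : List Answer) (a b : Plane) : Prop :=
  a ∈ known l ∧ b ∈ known l ∧ a ≠ b ∧ (∀ k ∈ known l, 0 ≤ cr (b - a) (k - a)) ∧
    (a, b) ∉ verified l

open Classical in
/-- The generic step: query an unverified edge, or output the hull of the known vertices. -/
def generic (l : List Answer) : DirLine ⊕ ConvexPolygon :=
  if h : ∃ e : Plane × Plane, Gap l e.1 e.2 then
    Sum.inl (thru h.choose.1 h.choose.2)
  else if h' : ∃ P : ConvexPolygon, P.verts = known l then Sum.inr h'.choose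
  else Sum.inl ⟨0, !₂[1, 0], norm_e⟩

/-- The strategy. -/
def strat (p : Plane) : Strategy
  | [] => Sum.inl ⟨p, !₂[1, 0], norm_e⟩
  | [some o1] => Sum.inl (thru o1.p₁ o1.p₂)
  | [some o1, some o2] => Sum.inl (thru o2.p₁ o1.p₁)
  | l => generic l

lemma strat_long (p : Plane) (l : List Answer) (h : 3 ≤ l.length) : strat p l = generic l := by
  match l, h with
  | a :: b :: c :: r, _ => cases a <;> cases b <;> rfl

lemma strat_out (p : Plane) (l : List Answer) (P : ConvexPolygon) (h : strat p l = Sum.inr P) :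
    generic l = Sum.inr P := by
  match l with
  | [] => simp [strat] at h
  | [none] => exact h
  | [some _] => simp [strat] at h
  | [none, _] => exact h
  | [some _, none] => exact h
  | [some _, some _] => simp [strat] at h
  | a :: b :: c :: r => rw [strat_long p _ (by simp)] at h; exact h

lemma consistent_snoc {ω : ℝ} {S : Strategy} {O : ConvexPolygon} {l : List Answer} {a : Answer}
    (h : Consistent ω S O (l ++ [a])) :
    Consistent ω S O l ∧ ∃ L, S l = Sum.inl L ∧ ValidAnswer ω O L a := by
  constructor
  · intro i hi
    obtain ⟨L, h1, h2⟩ := h i (by simp; omega)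
    refine ⟨L, ?_, ?_⟩
    · rwa [List.take_append_of_le_length hi.le] at h1
    · simpa [List.getElem_append_left hi] using h2
  · obtain ⟨L, h1, h2⟩ := h l.length (by simp)
    refine ⟨L, ?_, ?_⟩
    · simpa using h1
    · simpa using h2

/-- All answers in a play are outcomes of valid probes. -/
lemma answers_pd {S : Strategy} {O : ConvexPolygon} (H : NonNarrow O) {l : List Answer}
    (h : Consistent (Real.pi / 2) S O l) {o : Outcome} (ho : some o ∈ l) : PD O o := by
  obtain ⟨i, hi, e⟩ := List.getElem_of_mem ho
  obtain ⟨L, -, h2⟩ := h i hi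
  have e' : l.get ⟨i, hi⟩ = some o := e
  rw [e'] at h2
  exact outcome_pd O H h2

lemma known_sub {S : Strategy} {O : ConvexPolygon} (H : NonNarrow O) {l : List Answer}
    (h : Consistent (Real.pi / 2) S O l) : known l ⊆ O.verts := by
  intro x hx
  obtain ⟨o, ho, rfl | rfl⟩ := mem_known.1 hx
  · exact (answers_pd H h ho).v1
  · exact (answers_pd H h ho).v2

lemma verified_left {S : Strategy} {O : ConvexPolygon} (H : NonNarrow O) {l : List Answer}
    (h : Consistent (Real.pi / 2) S O l) {a b : Plane} (hv : (a, b) ∈ verified l) :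
    ∀ x ∈ O.body, 0 ≤ cr (b - a) (x - a) := by
  obtain ⟨-, -, -, o, ho, hf⟩ := mem_verified.1 hv
  exact flush_left (answers_pd H h ho) hf

/-- Sets of pairs of vertices with the polygon on the left are small. -/
lemma edges_card (O : ConvexPolygon) (T : Finset (Plane × Plane))
    (hT : ∀ e ∈ T, e.1 ∈ O.verts ∧ e.2 ∈ O.verts ∧ e.1 ≠ e.2 ∧
      ∀ x ∈ O.body, 0 ≤ cr (e.2 - e.1) (x - e.1)) : T.card ≤ O.verts.card := by
  apply Finset.card_le_card_of_injOn Prod.fst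
  · intro e he; exact (hT e he).1
  · rintro ⟨a, b⟩ he ⟨a', b'⟩ he' (rfl : a = a')
    obtain ⟨h1, h2, h3, h4⟩ := hT _ he
    obtain ⟨h1', h2', h3', h4'⟩ := hT _ he'
    simp only at *
    by_contra hne
    have hbb : b ≠ b' := by rintro rfl; exact hne rfl
    have k1 := h4 b' (verts_sub_body O h2')
    have k2 := h4' b (verts_sub_body O h2)
    apply not_collinear O h1 h2 h2' h3 h3' hbb
    simp only [cr] at *
    linarith

lemma verified_edges {S : Strategy} {O : ConvexPolygon} (H : NonNarrow O) {l : List Answer}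
    (h : Consistent (Real.pi / 2) S O l) : ∀ e ∈ verified l, e.1 ∈ O.verts ∧ e.2 ∈ O.verts ∧
      e.1 ≠ e.2 ∧ ∀ x ∈ O.body, 0 ≤ cr (e.2 - e.1) (x - e.1) := by
  rintro ⟨a, b⟩ he
  have hm := mem_verified.1 he
  exact ⟨known_sub H h hm.1, known_sub H h hm.2.1, hm.2.2.1, verified_left H h he⟩

open Classical in
/-- A missing vertex lies to the right of some hull edge of a set of vertices. -/
lemma exists_edge (O : ConvexPolygon) (K : Finset Plane) (hK : K ⊆ O.verts) (h2 : 1 < K.card)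
    {v : Plane} (hv : v ∈ O.verts) (hvK : v ∉ K) :
    ∃ a ∈ K, ∃ b ∈ K, a ≠ b ∧ (∀ k ∈ K, 0 ≤ cr (b - a) (k - a)) ∧ cr (b - a) (v - a) < 0 := by
  set T := (K ×ˢ K).filter fun e => e.1 ≠ e.2 ∧ cr (e.2 - e.1) (v - e.1) < 0 with hTdef
  have hT : T.Nonempty := by
    obtain ⟨a, ha, b, hb, hab⟩ := Finset.one_lt_card.1 h2
    have hav : a ≠ v := by rintro rfl; exact hvK ha
    have hbv : b ≠ v := by rintro rfl; exact hvK hb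
    rcases lt_or_gt_of_ne (not_collinear O (hK ha) (hK hb) hv hab hav hbv) with h | h
    · exact ⟨(a, b), by rw [hTdef]; simp [ha, hb, hab, h]⟩
    · refine ⟨(b, a), ?_⟩
      rw [hTdef]
      simp only [Finset.mem_filter, Finset.mem_product]
      refine ⟨⟨hb, ha⟩, hab.symm, ?_⟩
      simp only [cr, pl_sub] at *
      linarith
  obtain ⟨⟨a, b⟩, he, hmin⟩ := T.exists_min_image
    (fun e => (K.filter fun k => cr (e.2 - e.1) (k - e.1) < 0).card) hT
  rw [hTdef] at he
  simp only [Finset.mem_filter, Finset.mem_product] at he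
  obtain ⟨⟨ha, hb⟩, hab, hvr⟩ := he
  refine ⟨a, ha, b, hb, hab, ?_, hvr⟩
  by_contra hcon
  push Not at hcon
  obtain ⟨k, hk, hkr⟩ := hcon
  have hav : v ≠ a := by rintro rfl; exact hvK ha
  have hbv : v ≠ b := by rintro rfl; exact hvK hb
  have hkv : v ≠ k := by rintro rfl; exact hvK hk
  have hka : k ≠ a := by rintro rfl; simp [cr] at hkr
  have hkb : k ≠ b := by rintro rfl; simp only [cr] at hkr; linarith
  -- either `(a, k)` or `(k, b)` is a better pair
  have better : ∀ c d : Plane, c ∈ K → d ∈ K → c ≠ d → cr (d - c) (v - c) < 0 →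
      ¬ cr (d - c) (k - c) < 0 →
      (∀ y ∈ K, cr (d - c) (y - c) < 0 → cr (b - a) (y - a) < 0) → False := by
    intro c d hc hd hcd hvv hkk hsub
    have h1 := hmin (c, d) (by
      rw [hTdef]; simp only [Finset.mem_filter, Finset.mem_product]
      exact ⟨⟨hc, hd⟩, hcd, hvv⟩)
    simp only at h1
    have h2 : (K.filter fun k => cr (d - c) (k - c) < 0) ⊂
        (K.filter fun k => cr (b - a) (k - a) < 0) := by
      rw [Finset.ssubset_iff_of_subset]
      · exact ⟨k, by simp [hk, hkr], by simp [hk]; exact not_lt.1 hkk⟩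
      · intro y hy
        simp only [Finset.mem_filter] at *
        exact ⟨hy.1, hsub y hy.1 hy.2⟩
    have := Finset.card_lt_card h2
    omega
  by_cases h1 : cr (k - a) (v - a) < 0
  · refine better a k ha hk hka.symm h1 ?_ ?_
    · simp only [cr]; intro h; linarith
    · intro y hy hyr
      by_contra hc
      push Not at hc
      have hya : y ≠ a := by rintro rfl; simp [cr] at hyr
      refine no_comb O (hK ha) (hK hy) (hK hb) (hK hk) hya hab.symm hka
        (α := - cr (b - a) (k - a)) (β := - cr (k - a) (y - a)) (γ := cr (b - a) (y - a))
        (by linarith) (by linarith) hc (by linarith) ?_ ?_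
      · simp only [cr, pl_sub]; ring
      · simp only [cr, pl_sub]; ring
  · by_cases h2 : cr (b - k) (v - k) < 0
    · refine better k b hk hb hkb h2 ?_ ?_
      · simp [cr]
      · intro y hy hyr
        by_contra hc
        push Not at hc
        have hyb : y ≠ b := by rintro rfl; simp only [cr] at hyr; linarith
        refine no_comb O (hK hb) (hK hy) (hK ha) (hK hk) hyb hab hkb
          (α := - cr (b - a) (k - a)) (β := - cr (b - k) (y - k)) (γ := cr (b - a) (y - a))
          (by linarith) (by linarith) hc (by linarith) ?_ ?_
        · simp only [cr, pl_sub]; ring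
        · simp only [cr, pl_sub]; ring
    · push Not at h1 h2
      -- `v` lies in the triangle `a k b`
      refine no_comb O hv (hK ha) (hK hk) (hK hb) hav.symm hkv.symm hbv.symm
        (α := cr (b - k) (v - k)) (β := - cr (b - a) (v - a)) (γ := cr (k - a) (v - a))
        h2 (by linarith) h1 (by linarith) ?_ ?_
      · simp only [cr, pl_sub]; ring
      · simp only [cr, pl_sub]; ring

/-- Every output is correct. -/
lemma correct {O : ConvexPolygon} (H : NonNarrow O) {p : Plane} {l : List Answer}
    (h : Consistent (Real.pi / 2) (strat p) O l) {P : ConvexPolygon}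
    (hP : strat p l = Sum.inr P) : P.verts = O.verts := by
  have hg := strat_out p l P hP
  unfold generic at hg
  split_ifs at hg with h1 h2
  have e : P = h2.choose := by simpa using hg.symm
  have hk : P.verts = known l := by rw [e]; exact h2.choose_spec
  rw [hk]
  apply Finset.Subset.antisymm (known_sub H h)
  intro v hv
  by_contra hvK
  have hcard : 1 < (known l).card := by
    rw [← hk]; have := P.three_le_card; omega
  obtain ⟨a, ha, b, hb, hab, hleft, hr⟩ := exists_edge O _ (known_sub H h) hcard hv hvK
  by_cases hver : (a, b) ∈ verified l
  · have := verified_left H h hver v (verts_sub_body O hv)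
    linarith
  · exact h1 ⟨(a, b), ha, hb, hab, hleft, hver⟩

lemma known_mono {l l' : List Answer} (h : ∀ a ∈ l, a ∈ l') : known l ⊆ known l' := by
  intro x hx
  obtain ⟨o, ho, e⟩ := mem_known.1 hx
  exact mem_known.2 ⟨o, h _ ho, e⟩

lemma verified_mono {l l' : List Answer} (h : ∀ a ∈ l, a ∈ l') : verified l ⊆ verified l' := by
  rintro ⟨a, b⟩ hx
  obtain ⟨h1, h2, h3, o, ho, hf⟩ := mem_verified.1 hx
  exact mem_verified.2 ⟨known_mono h h1, known_mono h h2, h3, o, h _ ho, hf⟩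

/-- Valid answers to queries through the polygon are outcomes. -/
lemma valid_some {O : ConvexPolygon} {L : DirLine} (hL : L.pt ∈ O.body) {a : Answer}
    (h : ValidAnswer (Real.pi / 2) O L a) : ∃ o, a = some o ∧ IsOutcome (Real.pi / 2) O L o := by
  cases a with
  | none => exact absurd (exists_probe O L hL) h
  | some o => exact ⟨o, rfl, h⟩

open Classical in
lemma start_count (l : List Answer) (o1 o2 o3 : Outcome) (hl : l = [some o1, some o2, some o3])
    (h : o1.p₁ ≠ o1.p₂ ∧ o2.p₁ ≠ o1.p₁ ∧ o2.p₁ ≠ o1.p₂ ∧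
    o3.p₁ ≠ o1.p₁ ∧ o3.p₁ ≠ o1.p₂ ∧ o3.p₁ ≠ o2.p₁ ∧
    ((o2.p₂ ≠ o1.p₁ ∧ o2.p₂ ≠ o1.p₂ ∧ o2.p₂ ≠ o2.p₁ ∧ o2.p₂ ≠ o3.p₁ ∧
      ((o3.p₂ ≠ o1.p₁ ∧ o3.p₂ ≠ o1.p₂ ∧ o3.p₂ ≠ o2.p₁ ∧ o3.p₂ ≠ o3.p₁ ∧ o3.p₂ ≠ o2.p₂) ∨
        Flush o3 o1.p₁ o2.p₁)) ∨
     (Flush o2 o1.p₂ o1.p₁ ∧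
      ((o3.p₂ ≠ o1.p₁ ∧ o3.p₂ ≠ o1.p₂ ∧ o3.p₂ ≠ o2.p₁ ∧ o3.p₂ ≠ o3.p₁) ∨
        Flush o3 o1.p₁ o2.p₁)))) : 6 ≤ (known l).card + (verified l).card := by
  have k1 : o1.p₁ ∈ known l := mem_known.2 ⟨o1, by simp [hl], by simp⟩
  have k2 : o1.p₂ ∈ known l := mem_known.2 ⟨o1, by simp [hl], by simp⟩
  have k3 : o2.p₁ ∈ known l := mem_known.2 ⟨o2, by simp [hl], by simp⟩
  have k4 : o2.p₂ ∈ known l := mem_known.2 ⟨o2, by simp [hl], by simp⟩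
  have k5 : o3.p₁ ∈ known l := mem_known.2 ⟨o3, by simp [hl], by simp⟩
  have k6 : o3.p₂ ∈ known l := mem_known.2 ⟨o3, by simp [hl], by simp⟩
  obtain ⟨h1, h2, h3, h4, h5, h6, h7⟩ := h
  have f2 : Flush o2 o1.p₂ o1.p₁ → (o1.p₂, o1.p₁) ∈ verified l := fun hf =>
    mem_verified.2 ⟨k2, k1, h1.symm, o2, by simp [hl], hf⟩
  have f3 : Flush o3 o1.p₁ o2.p₁ → (o1.p₁, o2.p₁) ∈ verified l := fun hf =>
    mem_verified.2 ⟨k1, k3, h2.symm, o3, by simp [hl], hf⟩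
  have lower : ∀ (s : List Plane) (t : List (Plane × Plane)), s.Nodup → t.Nodup →
      (∀ x ∈ s, x ∈ known l) → (∀ e ∈ t, e ∈ verified l) →
      s.length + t.length ≤ (known l).card + (verified l).card := by
    intro s t hs ht hs' ht'
    rw [← List.toFinset_card_of_nodup hs, ← List.toFinset_card_of_nodup ht]
    apply Nat.add_le_add
    · apply Finset.card_le_card; intro x hx; exact hs' x (List.mem_toFinset.1 hx)
    · apply Finset.card_le_card; intro x hx; exact ht' x (List.mem_toFinset.1 hx)
  clear hl
  rcases h7 with ⟨c1, c2, c3, c4, ⟨z1, z2, z3, z4, z5⟩ | hz⟩ | ⟨hc, ⟨z1, z2, z3, z4⟩ | hz⟩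
  · refine lower [o3.p₂, o2.p₂, o3.p₁, o2.p₁, o1.p₁, o1.p₂] [] ?_ (by simp) ?_ (by simp)
    · simp [*]
    · simp [*]
  · refine lower [o2.p₂, o3.p₁, o2.p₁, o1.p₁, o1.p₂] [(o1.p₁, o2.p₁)] ?_ (by simp) ?_ ?_
    · simp [*]
    · simp [*]
    · simp [*]
  · refine lower [o3.p₂, o3.p₁, o2.p₁, o1.p₁, o1.p₂] [(o1.p₂, o1.p₁)] ?_ (by simp) ?_ ?_
    · simp [*]
    · simp [*]
    · simp [*]
  · refine lower [o3.p₁, o2.p₁, o1.p₁, o1.p₂] [(o1.p₂, o1.p₁), (o1.p₁, o2.p₁)] ?_ ?_ ?_ ?_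
    · simp [*]
    · simp [h1.symm]
    · simp [*]
    · simp [*]

/-- The potential grows with the number of probes. -/
lemma progress {O : ConvexPolygon} (H : NonNarrow O) {p : Plane} (hp : p ∈ O.body) :
    ∀ (k : ℕ) (l : List Answer), Consistent (Real.pi / 2) (strat p) O l → l.length = k + 3 →
      k + 6 ≤ (known l).card + (verified l).card := by
  intro k
  induction k with
  | zero =>
    intro l hl hlen
    obtain ⟨a1, a2, a3, rfl⟩ := List.length_eq_three.1 (by simpa using hlen)
    obtain ⟨hl2, L3, e3, v3⟩ := consistent_snoc (l := [a1, a2]) (a := a3) hl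
    obtain ⟨hl1, L2, e2, v2⟩ := consistent_snoc (l := [a1]) (a := a2) hl2
    obtain ⟨-, L1, e1, v1⟩ := consistent_snoc (l := []) (a := a1) hl1
    have e1' : L1 = ⟨p, !₂[1, 0], norm_e⟩ := by simpa [strat] using e1.symm
    obtain ⟨o1, rfl, i1⟩ := valid_some (by rw [e1']; exact hp) v1
    have e2' : L2 = thru o1.p₁ o1.p₂ := by simpa [strat] using e2.symm
    subst e2'
    obtain ⟨o2, rfl, i2⟩ := valid_some
      (by rw [thru_pt]; exact verts_sub_body O (outcome_pd O H i1).v1) v2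
    have e3' : L3 = thru o2.p₁ o1.p₁ := by simpa [strat] using e3.symm
    subst e3'
    obtain ⟨o3, rfl, i3⟩ := valid_some
      (by rw [thru_pt]; exact verts_sub_body O (outcome_pd O H i2).v1) v3
    exact start_count _ o1 o2 o3 rfl (start O H i1 i2 i3)
  | succ k ih =>
    intro l hl hlen
    obtain ⟨l', a, rfl⟩ : ∃ l' a, l = l' ++ [a] := by
      rcases List.eq_nil_or_concat l with h | ⟨l', a, h⟩
      · rw [h] at hlen; simp at hlen
      · exact ⟨l', a, by simpa using h⟩
    obtain ⟨hl', L, e, v⟩ := consistent_snoc hl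
    have hlen' : l'.length = k + 3 := by simp at hlen; omega
    have hi := ih l' hl' hlen'
    have hmono : ∀ x ∈ l', x ∈ l' ++ [a] := fun x hx => List.mem_append_left _ hx
    have hK := known_mono hmono
    have hV := verified_mono hmono
    rw [strat_long p l' (by omega)] at e
    unfold generic at e
    split_ifs at e with h1 h2
    · obtain ⟨ha, hb, hab, hleft, hnv⟩ := h1.choose_spec
      set x := h1.choose.1
      set y := h1.choose.2
      have e' : L = thru x y := by simpa using e.symm
      subst e'
      have mx := verts_sub_body O (known_sub H hl' ha)
      obtain ⟨o, rfl, i⟩ := valid_some (by rw [thru_pt]; exact mx) v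
      have hmem : some o ∈ l' ++ [some o] := by simp
      rcases (sides O H mx hab i).2.1 with hs | hs
      · have hnew : o.p₁ ∉ known l' := by
          intro hk
          have := hleft _ hk
          linarith
        have : known l' ⊂ known (l' ++ [some o]) := by
          rw [Finset.ssubset_iff_of_subset hK]
          exact ⟨o.p₁, mem_known.2 ⟨o, hmem, Or.inl rfl⟩, hnew⟩
        have := Finset.card_lt_card this
        have := Finset.card_le_card hV
        omega
      · have : verified l' ⊂ verified (l' ++ [some o]) := by
          rw [Finset.ssubset_iff_of_subset hV]
          exact ⟨(x, y), mem_verified.2 ⟨hK ha, hK hb, hab, o, hmem, hs⟩, hnv⟩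
        have := Finset.card_lt_card this
        have := Finset.card_le_card hK
        omega
    · -- the strategy would have been complete already
      exfalso
      by_cases hall : known l' = O.verts
      · exact h2 ⟨O, hall.symm⟩
      · obtain ⟨w, hw, hwK⟩ := Finset.exists_of_ssubset
          (lt_of_le_of_ne (known_sub H hl') hall)
        have hcard : 1 < (known l').card := by
          by_contra hc
          have hver : (verified l').card ≤ (known l' ×ˢ known l').card :=
            Finset.card_le_card (by
              rintro ⟨c, d⟩ he
              have := mem_verified.1 he
              exact Finset.mem_product.2 ⟨this.1, this.2.1⟩)
          rw [Finset.card_product] at hver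
          have : (known l').card * (known l').card ≤ 1 := by
            have : (known l').card ≤ 1 := by omega
            nlinarith
          omega
        obtain ⟨c, hc, d, hd, hcd, hleft, hr⟩ := exists_edge O _ (known_sub H hl') hcard hw hwK
        by_cases hver : (c, d) ∈ verified l'
        · have := verified_left H hl' hver w (verts_sub_body O hw)
          linarith
        · exact h1 ⟨(c, d), hc, hd, hcd, hleft, hver⟩

open Classical in
lemma terminates {O : ConvexPolygon} (H : NonNarrow O) {p : Plane} (hp : p ∈ O.body)
    {l : List Answer} (h : Consistent (Real.pi / 2) (strat p) O l)
    (hlen : l.length = 2 * O.verts.card - 3) : ∃ P, strat p l = Sum.inr P := by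
  have hn := O.three_le_card
  have hpr := progress H hp (2 * O.verts.card - 6) l h (by omega)
  have hk := Finset.card_le_card (known_sub H h)
  have hv := edges_card O _ (verified_edges H h)
  have hkn : known l = O.verts := Finset.eq_of_subset_of_card_le (known_sub H h) (by omega)
  rw [strat_long p l (by omega)]
  unfold generic
  have hno : ¬ ∃ e : Plane × Plane, Gap l e.1 e.2 := by
    rintro ⟨⟨a, b⟩, ha, hb, hab, hleft, hnv⟩
    simp only at *
    have := edges_card O (insert (a, b) (verified l)) (by
      intro e he
      rcases Finset.mem_insert.1 he with rfl | he
      · refine ⟨known_sub H h ha, known_sub H h hb, hab, ?_⟩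
        have : O.body ⊆ {x | 0 ≤ cr (b - a) (x - a)} := by
          apply convexHull_min
          · intro x hx
            exact hleft x (hkn ▸ hx)
          · intro x hx y hy s t hs ht hst
            simp only [Set.mem_ofPred_eq] at *
            have e : cr (b - a) (s • x + t • y - a) =
                s * cr (b - a) (x - a) + t * cr (b - a) (y - a) := by
              have : t = 1 - s := by linarith
              subst this
              simp only [cr, pl_add, pl_sub, pl_smul]; ring
            rw [e]; positivity
        exact fun x hx => this hx
      · exact verified_edges H h e he)
    rw [Finset.card_insert_of_notMem hnv] at this
    omega
  have hex : ∃ P : ConvexPolygon, P.verts = known l := ⟨O, hkn.symm⟩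
  rw [dif_neg hno, dif_pos hex]
  exact ⟨_, rfl⟩

/-- for `ω = π/2`, there is a strategy reconstructing every convex polygon
without narrow vertices, contained in `Ψ` and containing `p`, using at most `2n - 3` probes. -/
theorem reconstruct_no_narrow_right_angle (c : Plane) (r : ℝ) (hr : 0 < r) (p : Plane) :
    ∃ S : Strategy, ∀ O : ConvexPolygon,
      p ∈ O.body → O.body ⊆ Metric.closedBall c r →
      (∀ v ∈ O.verts, Real.pi / 2 < O.intAngle v) →
      Reconstructs (Real.pi / 2) S O (2 * O.verts.card - 3) := by
  refine ⟨strat p, fun O hp _ hang => ?_⟩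
  have H := nonNarrow_of O hang
  exact ⟨fun l hl P hP => correct H hl hP, fun l hl hlen => terminates H hp hl hlen⟩

end
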